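/- arXiv:1605.02571 — 5 statements merged into one kernel-verified Lean document; each statement's English description precedes it below -/
import Mathlib

section
/- Let X be a Tychonoff space and let λ, μ ∈ Ψ with μ ⊆ λ. Then the bitopological space (C(X), τ_λ, τ_μ) has countable (τ_λ, τ_μ)-tightness if and only if X is λ-μ-Lindelöf. -/
open Set Filter Topology TopologicalSpace ContinuousMap

/-- A subset `A` of `X` is *C-compact* if `f '' A` is compact in `ℝ` for every
continuous real-valued function `f` on `X`. -/
def IsCCompact {X : Type*} [TopologicalSpace X] (A : Set X) : Prop :=
  ∀ f : C(X, ℝ), IsCompact (f '' A)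

/-- The `λ`-open (set-open) topology on `C(X, ℝ)`, generated by the subbasic sets
`[F, U] = {f : f '' F ⊆ U}` for `F ∈ lam` and `U ⊆ ℝ` open. -/
def setOpenTopology {X : Type*} [TopologicalSpace X] (lam : Set (Set X)) :
    TopologicalSpace C(X, ℝ) :=
  TopologicalSpace.generateFrom
    {S | ∃ F ∈ lam, ∃ U : Set ℝ, IsOpen U ∧ S = {f : C(X, ℝ) | f '' F ⊆ U}}

/-- Membership in the collection `Ψ`: a family of nonempty closed C-compact subsets of `X`
forming a π-network, hereditary with respect to (closed) C-compact subsets of its elements,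
and maximal among families of nonempty sets inducing the same set-open topology. -/
structure MemPsi {X : Type*} [TopologicalSpace X] (lam : Set (Set X)) : Prop where
  nonempty : ∀ A ∈ lam, A.Nonempty
  closed : ∀ A ∈ lam, IsClosed A
  ccompact : ∀ A ∈ lam, IsCCompact A
  piNetwork : ∀ U : Set X, IsOpen U → U.Nonempty → ∃ A ∈ lam, A ⊆ U
  hereditary : ∀ A ∈ lam, ∀ B : Set X, B ⊆ A → B.Nonempty → IsClosed B → IsCCompact B →
    B ∈ lam
  maximal : ∀ lam' : Set (Set X), (∀ A ∈ lam', A.Nonempty) →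
    setOpenTopology lam' = setOpenTopology lam → lam' ⊆ lam

/-- A cozero (functional open) subset of `X`: the complement of a zero-set. -/
def IsCozero {X : Type*} [TopologicalSpace X] (U : Set X) : Prop :=
  ∃ f : C(X, ℝ), U = {x | f x ≠ 0}

/-- `𝒰` is a `λ`-f-cover: a family of cozero sets, not containing `X`, such that every
member of `lam` is contained in some member of `𝒰`. -/
def IsFCover {X : Type*} [TopologicalSpace X] (lam : Set (Set X)) (𝒰 : Set (Set X)) : Prop :=
  (Set.univ : Set X) ∉ 𝒰 ∧ (∀ U ∈ 𝒰, IsCozero U) ∧ ∀ A ∈ lam, ∃ U ∈ 𝒰, A ⊆ U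

/-- `Λ(λ)`: the collection of all `λ`-f-covers of `X`. -/
def fCovers {X : Type*} [TopologicalSpace X] (lam : Set (Set X)) : Set (Set (Set X)) :=
  {𝒰 | IsFCover lam 𝒰}

/-- The selection principle `S₁(𝒜, ℬ)`. -/
def S1 {α : Type*} (𝒜 ℬ : Set (Set α)) : Prop :=
  ∀ A : ℕ → Set α, (∀ n, A n ∈ 𝒜) →
    ∃ b : ℕ → α, (∀ n, b n ∈ A n) ∧ Set.range b ∈ ℬ

/-- The selection principle `S_fin(𝒜, ℬ)`. -/
def Sfin {α : Type*} (𝒜 ℬ : Set (Set α)) : Prop :=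
  ∀ A : ℕ → Set α, (∀ n, A n ∈ 𝒜) →
    ∃ B : ℕ → Set α, (∀ n, (B n).Finite ∧ B n ⊆ A n) ∧ (⋃ n, B n) ∈ ℬ

/-- `Ω_y` with respect to the topology `t`: sets having `y` in their closure but not
containing `y`. -/
def OmegaPt {Y : Type*} (t : TopologicalSpace Y) (y : Y) : Set (Set Y) :=
  {A | y ∈ @closure Y t A ∧ y ∉ A}

/-- Countable `(t₁, t₂)`-tightness of a bitopological space. -/
def CountableBiTightness {Y : Type*} (t1 t2 : TopologicalSpace Y) : Prop :=
  ∀ A : Set Y, ∀ f ∈ @closure Y t1 A, ∃ B ⊆ A, B.Countable ∧ f ∈ @closure Y t2 B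

/-- `X` is `λ`-`μ`-Lindelöf: every `λ`-f-cover has a countable subfamily which is a
`μ`-f-cover. -/
def LamMuLindelof {X : Type*} [TopologicalSpace X] (lam mu : Set (Set X)) : Prop :=
  ∀ 𝒰 : Set (Set X), IsFCover lam 𝒰 → ∃ 𝒱 ⊆ 𝒰, 𝒱.Countable ∧ IsFCover mu 𝒱

/-- Countable `(t₁, t₂)`-T-tightness: for every uncountable regular cardinal `κ` and every
increasing `κ`-indexed sequence of `t₁`-closed sets, the union is `t₂`-closed. -/
def CountableBiTTightness {Y : Type*} (t1 t2 : TopologicalSpace Y) : Prop :=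
  ∀ κ : Cardinal.{0}, Cardinal.aleph0 < κ → κ.IsRegular →
    ∀ A : κ.ord.ToType → Set Y, Monotone A → (∀ α, @IsClosed Y t1 (A α)) →
      @IsClosed Y t2 (⋃ α, A α)

/-- `X` is separably `λ`-submetrizable: there is a continuous map of `X` onto a separable
metric space which is one-to-one on `⋃ lam`. -/
def SeparablyLamSubmetrizable (X : Type*) [TopologicalSpace X] (lam : Set (Set X)) : Prop :=
  ∃ (Y : Type) (m : MetricSpace Y),
    @SeparableSpace Y m.toPseudoMetricSpace.toUniformSpace.toTopologicalSpace ∧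
    ∃ f : X → Y,
      @Continuous X Y _ m.toPseudoMetricSpace.toUniformSpace.toTopologicalSpace f ∧
      Function.Surjective f ∧ Set.InjOn f (⋃₀ lam)

/-- `R`-separability for a pair of topologies: from every sequence of `t₁`-dense sets one
can pick single points forming a `t₂`-dense set. -/
def RSepBi {Y : Type*} (t1 t2 : TopologicalSpace Y) : Prop :=
  ∀ D : ℕ → Set Y, (∀ n, @Dense Y t1 (D n)) →
    ∃ d : ℕ → Y, (∀ n, d n ∈ D n) ∧ @Dense Y t2 (Set.range d)

/-- `M`-separability for a pair of topologies. -/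
def MSepBi {Y : Type*} (t1 t2 : TopologicalSpace Y) : Prop :=
  ∀ D : ℕ → Set Y, (∀ n, @Dense Y t1 (D n)) →
    ∃ F : ℕ → Set Y, (∀ n, (F n).Finite ∧ F n ⊆ D n) ∧ @Dense Y t2 (⋃ n, F n)

/-- `H`-separability for a pair of topologies. -/
def HSepBi {Y : Type*} (t1 t2 : TopologicalSpace Y) : Prop :=
  ∀ D : ℕ → Set Y, (∀ n, @Dense Y t1 (D n)) →
    ∃ F : ℕ → Set Y, (∀ n, (F n).Finite ∧ F n ⊆ D n) ∧
      ∀ G : Set Y, @IsOpen Y t2 G → G.Nonempty →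
        ∀ᶠ n in Filter.atTop, (G ∩ F n).Nonempty

/-- A countable set `D` is groupable with respect to the topology `t`. -/
def GroupableIn {Y : Type*} (t : TopologicalSpace Y) (D : Set Y) : Prop :=
  ∃ A : ℕ → Set Y, (∀ n, (A n).Finite) ∧ D = ⋃ n, A n ∧
    ∀ G : Set Y, @IsOpen Y t G → G.Nonempty →
      ∀ᶠ n in Filter.atTop, (G ∩ A n).Nonempty

/-- `GN`-separability for a pair of topologies. -/
def GNSepBi {Y : Type*} (t1 t2 : TopologicalSpace Y) : Prop :=
  ∀ D : ℕ → Set Y, (∀ n, @Dense Y t1 (D n)) →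
    ∃ d : ℕ → Y, (∀ n, d n ∈ D n) ∧ @Dense Y t2 (Set.range d) ∧
      GroupableIn t2 (Set.range d)

/-- The `(t₁, t₂)`-Pytkeev property for a bitopological space. -/
def PytkeevBi {Y : Type*} (t1 t2 : TopologicalSpace Y) : Prop :=
  ∀ A : Set Y, ∀ g ∈ @closure Y t1 A, g ∉ A →
    ∃ B : ℕ → Set Y, (∀ n, (B n).Infinite ∧ B n ⊆ A) ∧
      ∀ G ∈ @nhds Y t2 g, ∃ n, B n ⊆ G

/-- A groupable `μ`-f-cover. -/
def GroupableFCover {X : Type*} [TopologicalSpace X] (mu 𝒱 : Set (Set X)) : Prop :=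
  𝒱.Countable ∧ IsFCover mu 𝒱 ∧
    ∃ G : ℕ → Set (Set X), (∀ m, (G m).Finite) ∧
      (Pairwise fun m k => Disjoint (G m) (G k)) ∧ 𝒱 = ⋃ m, G m ∧
      ∀ F ∈ mu, ∀ᶠ m in Filter.atTop, ∃ U ∈ G m, F ⊆ U

lemma IsCCompact.inter_preimage {X : Type*} [TopologicalSpace X] {A : Set X}
    (hA : IsCCompact A) (g : C(X, ℝ)) {K : Set ℝ} (hK : IsClosed K) :
    IsCCompact (A ∩ g ⁻¹' K) := by
  intro f
  have hP : IsCompact ((fun x => (f x, g x)) '' A) := by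
    have hc : IsClosed ((fun x => (f x, g x)) '' A) := by
      rw [← closure_subset_iff_isClosed]
      rintro ⟨s, t⟩ hp
      let h : C(X, ℝ) := ⟨fun x => |f x - s| + |g x - t|, by fun_prop⟩
      have h0 : (0 : ℝ) ∈ closure (h '' A) := by
        rw [Metric.mem_closure_iff] at hp ⊢
        intro ε hε
        obtain ⟨_, ⟨x, hx, rfl⟩, hd⟩ := hp (ε / 2) (by positivity)
        refine ⟨h x, ⟨x, hx, rfl⟩, ?_⟩
        rw [Prod.dist_eq, max_lt_iff, dist_comm, Real.dist_eq, dist_comm t, Real.dist_eq] at hd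
        have h1 : h x = |f x - s| + |g x - t| := rfl
        rw [dist_comm, Real.dist_eq, h1, sub_zero, abs_of_nonneg (by positivity)]
        simp only at hd
        linarith [hd.1, hd.2]
      rw [(hA h).isClosed.closure_eq] at h0
      obtain ⟨x, hx, hx0⟩ := h0
      have h1 : |f x - s| + |g x - t| = 0 := hx0
      have h2 := abs_nonneg (f x - s)
      have h3 := abs_nonneg (g x - t)
      refine ⟨x, hx, Prod.ext ?_ ?_⟩
      · exact sub_eq_zero.1 (abs_eq_zero.1 (by linarith))
      · exact sub_eq_zero.1 (abs_eq_zero.1 (by linarith))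
    refine ((hA f).prod (hA g)).of_isClosed_subset hc ?_
    rintro _ ⟨x, hx, rfl⟩
    exact ⟨⟨x, hx, rfl⟩, ⟨x, hx, rfl⟩⟩
  have h2 := (hP.inter_right (hK.preimage continuous_snd)).image continuous_fst
  convert h2 using 1
  ext y
  constructor
  · rintro ⟨x, ⟨hx, hk⟩, rfl⟩
    exact ⟨(f x, g x), ⟨⟨x, hx, rfl⟩, hk⟩, rfl⟩
  · rintro ⟨_, ⟨⟨x, hx, rfl⟩, hk⟩, rfl⟩
    exact ⟨x, ⟨hx, hk⟩, rfl⟩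

lemma isOpen_setOpen_basic {X : Type*} [TopologicalSpace X] {lam : Set (Set X)} {F : Set X}
    (hF : F ∈ lam) {U : Set ℝ} (hU : IsOpen U) :
    IsOpen[setOpenTopology lam] {f : C(X, ℝ) | f '' F ⊆ U} :=
  TopologicalSpace.GenerateOpen.basic _ ⟨F, hF, U, hU, rfl⟩

lemma MemPsi.union_mem {X : Type*} [TopologicalSpace X] {lam : Set (Set X)} (h : MemPsi lam)
    {A B : Set X} (hA : A ∈ lam) (hB : B ∈ lam) : A ∪ B ∈ lam := by
  refine h.maximal (insert (A ∪ B) lam) ?_ ?_ (mem_insert _ _)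
  · rintro C (rfl | hC)
    · exact (h.nonempty A hA).mono subset_union_left
    · exact h.nonempty C hC
  · apply le_antisymm
    · refine le_generateFrom ?_
      rintro _ ⟨F, hF, U, hU, rfl⟩
      exact isOpen_setOpen_basic (mem_insert_of_mem _ hF) hU
    · refine le_generateFrom ?_
      rintro _ ⟨F, hF | hF, U, hU, rfl⟩
      · subst hF
        have : IsOpen[setOpenTopology lam]
            ({f : C(X, ℝ) | f '' A ⊆ U} ∩ {f : C(X, ℝ) | f '' B ⊆ U}) :=
          TopologicalSpace.GenerateOpen.inter _ _
          (isOpen_setOpen_basic hA hU) (isOpen_setOpen_basic hB hU)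
        convert this using 1
        ext f
        simp [image_union]
      · exact isOpen_setOpen_basic hF hU

lemma MemPsi.mem_closure {X : Type*} [TopologicalSpace X] [Nonempty X]
    {lam : Set (Set X)} (h : MemPsi lam) (S : Set C(X, ℝ)) (f : C(X, ℝ)) :
    f ∈ @closure _ (setOpenTopology lam) S ↔
      ∀ A ∈ lam, ∀ ε > 0, ∃ g ∈ S, ∀ x ∈ A, |g x - f x| < ε := by
  rw [@mem_closure_iff _ (setOpenTopology lam)]
  constructor
  · intro H A hA ε hε
    obtain ⟨t, htA, htf, hcov⟩ :=
      (h.ccompact A hA f).finite_cover_balls (e := ε / 4) (by positivity)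
    let O : Set C(X, ℝ) := ⋂ c ∈ t, {g : C(X, ℝ) |
      g '' (A ∩ f ⁻¹' (Metric.closedBall c (ε / 4))) ⊆ Metric.ball c (ε / 2)}
    have hO : IsOpen[setOpenTopology lam] O := by
      refine @Set.Finite.isOpen_biInter _ _ (setOpenTopology lam) _ _ htf ?_
      intro c hc
      refine isOpen_setOpen_basic ?_ Metric.isOpen_ball
      refine h.hereditary A hA _ inter_subset_left ?_ ?_ ?_
      · obtain ⟨x, hx, rfl⟩ := htA hc
        exact ⟨x, hx, Metric.mem_closedBall_self (by positivity)⟩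
      · exact (h.closed A hA).inter (Metric.isClosed_closedBall.preimage f.continuous)
      · exact (h.ccompact A hA).inter_preimage f Metric.isClosed_closedBall
    have hfO : f ∈ O := by
      simp only [O, mem_iInter]
      rintro c hc _ ⟨x, ⟨_, hx⟩, rfl⟩
      exact Metric.closedBall_subset_ball (by linarith) hx
    obtain ⟨g, hgO, hgS⟩ := H O hO hfO
    refine ⟨g, hgS, fun x hx => ?_⟩
    obtain ⟨c, hc, hxc⟩ := mem_iUnion₂.1 (hcov (mem_image_of_mem f hx))
    simp only [O, mem_iInter] at hgO
    have h1 := hgO c hc ⟨x, ⟨hx, Metric.ball_subset_closedBall hxc⟩, rfl⟩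
    rw [Metric.mem_ball] at h1 hxc
    rw [← Real.dist_eq]
    have := dist_triangle_right (g x) (f x) c
    linarith
  · intro H O hO hfO
    have key : ∃ A ∈ lam, ∃ ε > 0, ∀ g : C(X, ℝ), (∀ x ∈ A, |g x - f x| < ε) → g ∈ O := by
      change TopologicalSpace.GenerateOpen _ O at hO
      induction hO with
      | basic s hs =>
        obtain ⟨F, hF, U, hU, rfl⟩ := hs
        obtain ⟨δ, hδ, hsub⟩ := (h.ccompact F hF f).exists_thickening_subset_open hU hfO
        refine ⟨F, hF, δ, hδ, ?_⟩
        rintro g hg _ ⟨x, hx, rfl⟩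
        refine hsub (Metric.mem_thickening_iff.2 ⟨f x, ⟨x, hx, rfl⟩, ?_⟩)
        rw [Real.dist_eq]
        exact hg x hx
      | univ =>
        obtain ⟨A, hA, _⟩ := h.piNetwork univ isOpen_univ univ_nonempty
        exact ⟨A, hA, 1, one_pos, fun _ _ => trivial⟩
      | inter s t _ _ ihs iht =>
        obtain ⟨A, hA, a, ha, h1⟩ := ihs hfO.1
        obtain ⟨B, hB, b, hb, h2⟩ := iht hfO.2
        refine ⟨A ∪ B, h.union_mem hA hB, min a b, lt_min ha hb, fun g hg => ⟨?_, ?_⟩⟩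
        · exact h1 g fun x hx => (hg x (Or.inl hx)).trans_le (min_le_left _ _)
        · exact h2 g fun x hx => (hg x (Or.inr hx)).trans_le (min_le_right _ _)
      | sUnion T _ ih =>
        obtain ⟨s, hs, hfs⟩ := hfO
        obtain ⟨A, hA, a, ha, h1⟩ := ih s hs hfs
        exact ⟨A, hA, a, ha, fun g hg => ⟨s, hs, h1 g hg⟩⟩
    obtain ⟨A, hA, ε, hε, hk⟩ := key
    obtain ⟨g, hgS, hg⟩ := H A hA ε hε
    exact ⟨g, hk g hg, hgS⟩

/-- For a Tychonoff space `X` and `λ, μ ∈ Ψ` with `μ ⊆ λ`, the bitopological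
space `(C(X), τ_λ, τ_μ)` has countable `(τ_λ, τ_μ)`-tightness iff `X` is `λ`-`μ`-Lindelöf. -/
theorem countableBiTightness_iff_lamMuLindelof
    {X : Type*} [TopologicalSpace X] [T35Space X]
    (lam mu : Set (Set X)) (hlam : MemPsi lam) (hmu : MemPsi mu) (hsub : mu ⊆ lam) :
    CountableBiTightness (setOpenTopology lam) (setOpenTopology mu) ↔
      LamMuLindelof lam mu := by
  rcases isEmpty_or_nonempty X with hX | hX
  · constructor
    · intro _ 𝒰 _
      refine ⟨∅, empty_subset _, countable_empty, notMem_empty _, by simp, ?_⟩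
      intro A hA
      obtain ⟨x, _⟩ := hmu.nonempty A hA
      exact (hX.false x).elim
    · intro _ A f hf
      have hs : Subsingleton C(X, ℝ) := ⟨fun a b => ContinuousMap.ext fun x => (hX.false x).elim⟩
      have hne : A.Nonempty := by
        rw [nonempty_iff_ne_empty]
        rintro rfl
        rw [@closure_empty _ (setOpenTopology lam)] at hf
        exact hf
      obtain ⟨a, ha⟩ := hne
      rw [Subsingleton.elim f a]
      exact ⟨A, subset_rfl, A.to_countable, @subset_closure _ (setOpenTopology mu) _ _ ha⟩
  constructor
  · rintro H 𝒰 ⟨hU1, hU2, hU3⟩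
    let S : Set C(X, ℝ) := {g | ∃ U ∈ 𝒰, ∀ x, x ∉ U → g x = 1}
    have h0 : (0 : C(X, ℝ)) ∈ @closure _ (setOpenTopology lam) S := by
      rw [hlam.mem_closure]
      intro A hA ε hε
      obtain ⟨U, hU, hAU⟩ := hU3 A hA
      obtain ⟨k, rfl⟩ := hU2 U hU
      obtain ⟨δ, hδ, hk⟩ : ∃ δ > 0, ∀ x ∈ A, δ ≤ |k x| := by
        obtain ⟨δ, hδ, hsub⟩ := (hlam.ccompact A hA k).exists_thickening_subset_open
          (isOpen_compl_singleton (x := (0 : ℝ))) (by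
            rintro _ ⟨x, hx, rfl⟩
            exact hAU hx)
        refine ⟨δ, hδ, fun x hx => ?_⟩
        by_contra! hlt
        refine hsub (Metric.mem_thickening_iff.2 ⟨k x, ⟨x, hx, rfl⟩, ?_⟩) (mem_singleton (0 : ℝ))
        rwa [dist_comm, Real.dist_eq, sub_zero]
      refine ⟨⟨fun x => max 0 (1 - |k x| / δ), by fun_prop⟩, ⟨_, hU, ?_⟩, ?_⟩
      · intro x hx
        have : k x = 0 := by simpa using hx
        simp [this]
      · intro x hx
        have : 1 ≤ |k x| / δ := (one_le_div hδ).2 (hk x hx)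
        have h2 : max 0 (1 - |k x| / δ) = 0 := max_eq_left (by linarith)
        simpa [h2] using hε
    obtain ⟨B, hBS, hBc, hB⟩ := H S 0 h0
    rw [hmu.mem_closure] at hB
    have hBS' : ∀ g ∈ B, ∃ U ∈ 𝒰, ∀ x, x ∉ U → g x = 1 := fun g hg => hBS hg
    choose! u hu1 hu2 using hBS'
    refine ⟨u '' B, ?_, hBc.image u, ?_, ?_, ?_⟩
    · rintro _ ⟨g, hg, rfl⟩
      exact hu1 g hg
    · rintro ⟨g, hg, hgu⟩
      exact hU1 (hgu ▸ hu1 g hg)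
    · rintro _ ⟨g, hg, rfl⟩
      exact hU2 _ (hu1 g hg)
    · intro A hA
      obtain ⟨g, hg, hgA⟩ := hB A hA 1 one_pos
      refine ⟨u g, ⟨g, hg, rfl⟩, fun x hx => ?_⟩
      by_contra hxu
      have := hgA x hx
      rw [hu2 g hg x hxu] at this
      simp at this
  · intro H S f hf
    rw [hlam.mem_closure] at hf
    have step : ∀ n : ℕ, ∃ B ⊆ S, B.Countable ∧
        ∀ A ∈ mu, ∃ g ∈ B, ∀ x ∈ A, |g x - f x| < 1 / ((n : ℝ) + 1) := by
      intro n
      have hn : (0 : ℝ) < 1 / ((n : ℝ) + 1) := by positivity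
      let V : C(X, ℝ) → Set X := fun g => {x | |g x - f x| < 1 / ((n : ℝ) + 1)}
      by_cases hun : univ ∈ V '' S
      · obtain ⟨g, hg, hgV⟩ := hun
        refine ⟨{g}, by simpa using hg, countable_singleton g, fun A _ => ⟨g, rfl, fun x _ => ?_⟩⟩
        have : x ∈ V g := hgV ▸ mem_univ x
        exact this
      · obtain ⟨𝒱, hsub𝒱, hc, _, _, hcov⟩ := H (V '' S) ⟨hun, by
          rintro _ ⟨g, _, rfl⟩
          refine ⟨⟨fun x => max 0 (1 / ((n : ℝ) + 1) - |g x - f x|), by fun_prop⟩, ?_⟩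
          ext x
          simp [V], by
          intro A hA
          obtain ⟨g, hg, hgA⟩ := hf A hA _ hn
          exact ⟨V g, ⟨g, hg, rfl⟩, hgA⟩⟩
        have hs : ∀ v ∈ 𝒱, ∃ g ∈ S, V g = v := fun v hv => hsub𝒱 hv
        choose! w hw1 hw2 using hs
        refine ⟨w '' 𝒱, ?_, hc.image w, ?_⟩
        · rintro _ ⟨v, hv, rfl⟩
          exact hw1 v hv
        · intro A hA
          obtain ⟨U, hU, hAU⟩ := hcov A hA
          refine ⟨w U, ⟨U, hU, rfl⟩, fun x hx => ?_⟩
          have : x ∈ V (w U) := by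
            rw [hw2 U hU]
            exact hAU hx
          exact this
    choose B hB1 hB2 hB3 using step
    refine ⟨⋃ n, B n, iUnion_subset hB1, countable_iUnion hB2, ?_⟩
    rw [hmu.mem_closure]
    intro A hA ε hε
    obtain ⟨n, hn⟩ := exists_nat_one_div_lt hε
    obtain ⟨g, hg, hgA⟩ := hB3 n A hA
    exact ⟨g, mem_iUnion.2 ⟨n, hg⟩, fun x hx => (hgA x hx).trans hn⟩
end

section
/- Let X be a Tychonoff space and λ ∈ Ψ. The space C_λ(X) has countable T-tightness if and only if for each uncountable regular cardinal κ and each increasing κ-indexed sequence (𝒰_α : α < κ) of families of cozero subsets of X such that ⋃_{α<κ} 𝒰_α is a λ-f-cover of X, there exists β < κ such that 𝒰_β is a λ-f-cover of X. -/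
open Set Filter Topology TopologicalSpace ContinuousMap

namespace TTight

variable {X : Type*} [TopologicalSpace X] {lam : Set (Set X)}

lemma mem_union (h : MemPsi lam) {A B : Set X} (hA : A ∈ lam) (hB : B ∈ lam) : A ∪ B ∈ lam := by
  refine h.maximal (insert (A ∪ B) lam) ?_ ?_ (mem_insert _ _)
  · rintro C (rfl | hC)
    · exact (h.nonempty A hA).mono subset_union_left
    · exact h.nonempty C hC
  · apply le_antisymm
    · apply generateFrom_anti
      rintro S ⟨F, hF, U, hU, rfl⟩
      exact ⟨F, mem_insert_of_mem _ hF, U, hU, rfl⟩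
    · apply le_generateFrom
      rintro S ⟨F, hF, U, hU, rfl⟩
      rcases hF with rfl | hF
      · have : {f : C(X, ℝ) | f '' (A ∪ B) ⊆ U} =
            {f : C(X, ℝ) | f '' A ⊆ U} ∩ {f : C(X, ℝ) | f '' B ⊆ U} := by
          ext f
          simp [image_union]
        rw [this]
        exact GenerateOpen.inter _ _ (GenerateOpen.basic _ ⟨A, hA, U, hU, rfl⟩)
          (GenerateOpen.basic _ ⟨B, hB, U, hU, rfl⟩)
      · exact GenerateOpen.basic _ ⟨F, hF, U, hU, rfl⟩

/-- A continuous function without zeros on a C-compact set is bounded away from zero. -/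
lemma exists_pos_le {A : Set X} (hA : IsCCompact A) (g : C(X, ℝ)) (hg : ∀ x ∈ A, g x ≠ 0) :
    ∃ ε > 0, ∀ x ∈ A, ε ≤ |g x| := by
  have h0 : (g '' A)ᶜ ∈ 𝓝 (0 : ℝ) := by
    apply (hA g).isClosed.isOpen_compl.mem_nhds
    rintro ⟨x, hx, h⟩
    exact hg x hx h
  obtain ⟨ε, hε, hb⟩ := Metric.mem_nhds_iff.1 h0
  refine ⟨ε, hε, fun x hx => ?_⟩
  by_contra hlt
  push Not at hlt
  exact hb (by simpa using hlt : g x ∈ Metric.ball (0:ℝ) ε) ⟨x, hx, rfl⟩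

lemma ccompact_inter {A : Set X} (hA : IsCCompact A) (k : C(X, ℝ)) :
    IsCCompact (A ∩ {x | k x = 0}) := by
  intro h
  refine (hA h).of_isClosed_subset ?_ (image_mono inter_subset_left)
  rw [← isOpen_compl_iff, Metric.isOpen_iff]
  intro y hy
  let p : C(X, ℝ) := ⟨fun x => |h x - y| + |k x|, by fun_prop⟩
  obtain ⟨ε, hε, hb⟩ := exists_pos_le hA p (by
    intro x hx h0
    have h0 : |h x - y| + |k x| = 0 := h0
    have h1 := abs_nonneg (h x - y)
    have h2 := abs_nonneg (k x)
    refine hy ⟨x, ⟨hx, ?_⟩, ?_⟩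
    · exact abs_eq_zero.1 (by linarith)
    · exact sub_eq_zero.1 (abs_eq_zero.1 (by linarith)))
  refine ⟨ε, hε, ?_⟩
  rintro _ hz ⟨x, ⟨hx, hk⟩, rfl⟩
  have := hb x hx
  have hk : k x = 0 := hk
  simp only [p, ContinuousMap.coe_mk, hk, abs_zero, add_zero, abs_abs] at this
  rw [Metric.mem_ball, Real.dist_eq] at hz
  linarith

lemma exists_of_open (h : MemPsi lam) (hne : lam.Nonempty) (f : C(X, ℝ)) {O : Set C(X, ℝ)}
    (hO : @IsOpen _ (setOpenTopology lam) O) (hf : f ∈ O) :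
    ∃ F ∈ lam, ∃ ε > 0, {g : C(X, ℝ) | ∀ x ∈ F, |g x - f x| < ε} ⊆ O := by
  induction hO with
  | basic s hs =>
    obtain ⟨F, hF, U, hU, rfl⟩ := hs
    obtain ⟨ε, hε, ht⟩ := (h.ccompact F hF f).exists_thickening_subset_open hU hf
    refine ⟨F, hF, ε, hε, ?_⟩
    rintro g hg _ ⟨x, hx, rfl⟩
    exact ht (Metric.mem_thickening_iff.2 ⟨f x, ⟨x, hx, rfl⟩, hg x hx⟩)
  | univ =>
    obtain ⟨F, hF⟩ := hne
    exact ⟨F, hF, 1, one_pos, subset_univ _⟩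
  | inter s t _ _ ihs iht =>
    obtain ⟨F, hF, ε, hε, h1⟩ := ihs hf.1
    obtain ⟨G, hG, δ, hδ, h2⟩ := iht hf.2
    refine ⟨F ∪ G, mem_union h hF hG, min ε δ, lt_min hε hδ, fun g hg => ⟨h1 ?_, h2 ?_⟩⟩
    · exact fun x hx => (hg x (Or.inl hx)).trans_le (min_le_left _ _)
    · exact fun x hx => (hg x (Or.inr hx)).trans_le (min_le_right _ _)
  | sUnion S _ ih =>
    obtain ⟨s, hs, hfs⟩ := hf
    obtain ⟨F, hF, ε, hε, h1⟩ := ih s hs hfs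
    exact ⟨F, hF, ε, hε, h1.trans (subset_sUnion_of_mem hs)⟩

lemma ball_mem_nhds (h : MemPsi lam) (f : C(X, ℝ)) {F : Set X} (hF : F ∈ lam) {ε : ℝ}
    (hε : 0 < ε) :
    {g : C(X, ℝ) | ∀ x ∈ F, |g x - f x| < ε} ∈ @nhds _ (setOpenTopology lam) f := by
  letI := setOpenTopology lam
  obtain ⟨t, htF, htfin, hcov⟩ := (h.ccompact F hF f).finite_cover_balls
    (e := ε / 3) (by positivity)
  let G : ℝ → Set X := fun y => F ∩ {x | |f x - y| ≤ ε / 3}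
  have hG : ∀ y ∈ t, {g : C(X, ℝ) | g '' (G y) ⊆ Metric.ball y (ε / 2)} ∈ 𝓝 f := by
    intro y hy
    have hGm : G y ∈ lam := by
      apply h.hereditary F hF _ inter_subset_left
      · obtain ⟨x, hx, rfl⟩ := htF hy
        refine ⟨x, hx, ?_⟩
        simp only [mem_setOf_eq, sub_self, abs_zero]
        positivity
      · exact (h.closed F hF).inter (isClosed_le (by fun_prop) (by fun_prop))
      · have := ccompact_inter (h.ccompact F hF)
          (⟨fun x => max (|f x - y| - ε / 3) 0, by fun_prop⟩ : C(X, ℝ))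
        convert! this using 2
        ext x
        simp
    apply IsOpen.mem_nhds
    · exact GenerateOpen.basic _ ⟨G y, hGm, _, Metric.isOpen_ball, rfl⟩
    · rintro _ ⟨x, hx, rfl⟩
      have hx2 : |f x - y| ≤ ε / 3 := hx.2
      rw [Metric.mem_ball, Real.dist_eq]
      linarith
  filter_upwards [(Filter.biInter_mem htfin).2 hG] with g hg x hx
  obtain ⟨y, hy, hxy⟩ := mem_iUnion₂.1 (hcov ⟨x, hx, rfl⟩)
  rw [Metric.mem_ball, Real.dist_eq] at hxy
  have h1 : g x ∈ Metric.ball y (ε / 2) := mem_iInter₂.1 hg y hy ⟨x, ⟨hx, hxy.le⟩, rfl⟩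
  rw [Metric.mem_ball, Real.dist_eq] at h1
  rw [abs_lt] at *
  constructor <;> linarith

lemma mem_closure_iff' (h : MemPsi lam) (hne : lam.Nonempty) (f : C(X, ℝ)) (S : Set C(X, ℝ)) :
    f ∈ @closure _ (setOpenTopology lam) S ↔
      ∀ F ∈ lam, ∀ ε > 0, ∃ g ∈ S, ∀ x ∈ F, |g x - f x| < ε := by
  letI := setOpenTopology lam
  constructor
  · intro hf F hF ε hε
    obtain ⟨g, hg, hgS⟩ := mem_closure_iff_nhds.1 hf _ (ball_mem_nhds h f hF hε)
    exact ⟨g, hgS, hg⟩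
  · intro H
    refine mem_closure_iff.2 fun O hO hfO => ?_
    obtain ⟨F, hF, ε, hε, hsub⟩ := exists_of_open h hne f hO hfO
    obtain ⟨g, hgS, hg⟩ := H F hF ε hε
    exact ⟨g, hsub hg, hgS⟩

lemma exists_bound {κ : Cardinal.{0}} (hκ : Cardinal.aleph0 < κ) (hr : κ.IsRegular)
    (b : ℕ → κ.ord.ToType) : ∃ β, ∀ n, b n ≤ β := by
  by_contra H
  push Not at H
  have hc : IsCofinal (range b) := by
    intro a
    obtain ⟨n, hn⟩ := H a
    exact ⟨b n, ⟨n, rfl⟩, hn.le⟩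
  have h1 := Order.cof_le hc
  rw [Ordinal.cof_toType, hr.cof_ord] at h1
  exact absurd (h1.trans (Cardinal.mk_le_aleph0_iff.2 (countable_range b).to_subtype)) hκ.not_ge

lemma nonempty_toType {κ : Cardinal.{0}} (hκ : Cardinal.aleph0 < κ) :
    Nonempty κ.ord.ToType := by
  rw [← Cardinal.mk_ne_zero_iff, Cardinal.mk_toType, Cardinal.card_ord]
  exact (Cardinal.aleph0_pos.trans hκ).ne'

end TTight

open TTight in
/-- For a Tychonoff space `X` and `λ ∈ Ψ`, `C_λ(X)` has countable T-tightness
iff for each uncountable regular cardinal `κ` and each increasing `κ`-indexed sequence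
`(𝒰_α : α < κ)` of families of cozero subsets of `X` whose union is a `λ`-f-cover of `X`,
some `𝒰_β` is a `λ`-f-cover of `X`. -/
theorem tTightness_iff_fCover_selection
    {X : Type*} [TopologicalSpace X] [T35Space X]
    (lam : Set (Set X)) (hlam : MemPsi lam) :
    CountableBiTTightness (setOpenTopology lam) (setOpenTopology lam) ↔
      (∀ κ : Cardinal.{0}, Cardinal.aleph0 < κ → κ.IsRegular →
        ∀ 𝒰 : κ.ord.ToType → Set (Set X), Monotone 𝒰 →
          (∀ α, ∀ V ∈ 𝒰 α, IsCozero V) →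
          IsFCover lam (⋃ α, 𝒰 α) →
          ∃ β, IsFCover lam (𝒰 β)) := by
  rcases isEmpty_or_nonempty X with hX | hX
  · have hsub : Subsingleton C(X, ℝ) := ⟨fun f g => ContinuousMap.ext fun x => isEmptyElim x⟩
    constructor
    · intro _ κ hκ _ 𝒰 _ hco hcov
      obtain ⟨β⟩ := nonempty_toType hκ
      refine ⟨β, fun hu => hcov.1 (mem_iUnion.2 ⟨β, hu⟩), hco β, fun A hA => ?_⟩
      obtain ⟨x, _⟩ := hlam.nonempty A hA
      exact isEmptyElim x
    · intro _ κ _ _ A _ _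
      letI := setOpenTopology lam
      rcases Subsingleton.set_cases (p := fun s => s = ∅ ∨ s = univ) (Or.inl rfl) (Or.inr rfl) (⋃ α, A α) with h | h
      · rw [h]; exact isClosed_empty
      · rw [h]; exact isClosed_univ
  have hne : lam.Nonempty := by
    obtain ⟨A, hA, _⟩ := hlam.piNetwork univ isOpen_univ univ_nonempty
    exact ⟨A, hA⟩
  constructor
  · intro hT κ hκ hr 𝒰 hmono hco hcov
    let A : κ.ord.ToType → Set C(X, ℝ) := fun α => {f | ∃ U ∈ 𝒰 α, ∀ x, x ∉ U → f x = 1}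
    have hA : Monotone A := by
      rintro α β hαβ f ⟨U, hU, hf⟩
      exact ⟨U, hmono hαβ hU, hf⟩
    have hcl := hT κ hκ hr (fun α => @closure _ (setOpenTopology lam) (A α))
      (fun α β hαβ => @closure_mono _ (setOpenTopology lam) _ _ (hA hαβ))
      (fun α => @isClosed_closure _ (setOpenTopology lam) _)
    have h0 : (0 : C(X, ℝ)) ∈ @closure _ (setOpenTopology lam) (⋃ α, A α) := by
      rw [mem_closure_iff' hlam hne]
      intro F hF ε hε
      obtain ⟨U, hU, hFU⟩ := hcov.2.2 F hF
      obtain ⟨α, hα⟩ := mem_iUnion.1 hU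
      obtain ⟨g, rfl⟩ := hco α U hα
      obtain ⟨δ, hδ, hb⟩ := exists_pos_le (hlam.ccompact F hF) g hFU
      refine ⟨⟨fun x => 1 - min 1 (|g x| / δ), by fun_prop⟩,
        mem_iUnion.2 ⟨α, _, hα, ?_⟩, ?_⟩
      · intro x hx
        have : g x = 0 := by simpa using hx
        simp [this]
      · intro x hx
        have : 1 ≤ |g x| / δ := by rw [le_div_iff₀ hδ]; linarith [hb x hx]
        simpa [min_eq_left this] using hε
    have h1 : (0 : C(X, ℝ)) ∈ ⋃ α, @closure _ (setOpenTopology lam) (A α) := by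
      refine (@IsClosed.closure_subset_iff _ (setOpenTopology lam) _ _ hcl).2 ?_ h0
      exact iUnion_mono fun α => @subset_closure _ (setOpenTopology lam) _
    obtain ⟨β, hβ⟩ := mem_iUnion.1 h1
    refine ⟨β, fun hu => hcov.1 (mem_iUnion.2 ⟨β, hu⟩), hco β, fun F hF => ?_⟩
    obtain ⟨f, ⟨U, hU, hfU⟩, hf⟩ := (mem_closure_iff' hlam hne _ _).1 hβ F hF 1 one_pos
    refine ⟨U, hU, fun x hx => ?_⟩
    by_contra hxU
    have := hf x hx
    rw [hfU x hxU] at this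
    simp at this
  · intro H κ hκ hr A hmono hcl
    refine (@closure_subset_iff_isClosed _ (setOpenTopology lam) _).1 fun f hf => ?_
    rw [mem_closure_iff' hlam hne] at hf
    have key : ∀ n : ℕ, ∃ β, ∀ F ∈ lam, ∃ g ∈ A β, ∀ x ∈ F, |g x - f x| < 1 / ((n : ℝ) + 1) := by
      intro n
      have hn : (0 : ℝ) < 1 / ((n : ℝ) + 1) := by positivity
      let 𝒰 : κ.ord.ToType → Set (Set X) := fun α =>
        {V | ∃ g ∈ A α, V = {x | |g x - f x| < 1 / ((n : ℝ) + 1)}}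
      by_cases hu : univ ∈ ⋃ α, 𝒰 α
      · obtain ⟨β, g, hg, hV⟩ := mem_iUnion.1 hu
        refine ⟨β, fun F _ => ⟨g, hg, fun x _ => ?_⟩⟩
        have : x ∈ (univ : Set X) := mem_univ x
        rw [hV] at this
        exact this
      · have hco : ∀ α, ∀ V ∈ 𝒰 α, IsCozero V := by
          rintro α _ ⟨g, _, rfl⟩
          refine ⟨⟨fun x => max (1 / ((n : ℝ) + 1) - |g x - f x|) 0, by fun_prop⟩, ?_⟩
          ext x
          simp only [mem_setOf_eq, ContinuousMap.coe_mk, ne_eq, max_eq_right_iff, not_le, sub_pos]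
        obtain ⟨β, hβ⟩ := H κ hκ hr 𝒰
          (by
            rintro α β hαβ V ⟨g, hg, hV⟩
            exact ⟨g, hmono hαβ hg, hV⟩) hco
          (by
            refine ⟨hu, ?_, ?_⟩
            · intro V hV
              obtain ⟨α, hα⟩ := mem_iUnion.1 hV
              exact hco α V hα
            · intro F hF
              obtain ⟨g, hg, hgF⟩ := hf F hF _ hn
              obtain ⟨α, hα⟩ := mem_iUnion.1 hg
              exact ⟨_, mem_iUnion.2 ⟨α, g, hα, rfl⟩, hgF⟩)
        refine ⟨β, fun F hF => ?_⟩
        obtain ⟨_, ⟨g, hg, rfl⟩, hFg⟩ := hβ.2.2 F hF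
        exact ⟨g, hg, hFg⟩
    choose b hb using key
    obtain ⟨β, hβ⟩ := exists_bound hκ hr b
    refine mem_iUnion.2 ⟨β, ?_⟩
    rw [← @IsClosed.closure_eq _ (setOpenTopology lam) _ (hcl β), mem_closure_iff' hlam hne]
    intro F hF ε hε
    obtain ⟨n, hn⟩ := exists_nat_one_div_lt hε
    obtain ⟨g, hg, hgF⟩ := hb n F hF
    exact ⟨g, hmono (hβ n) hg, fun x hx => (hgF x hx).trans hn⟩
end

section
/- Let X be a Tychonoff space and λ ∈ Ψ. Then C_λ(X) is a separable space if and only if X is separably λ-submetrizable. -/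
open Set Filter Topology TopologicalSpace ContinuousMap

theorem aux_closed_image {X H : Type*} [TopologicalSpace X] [MetricSpace H]
    (f : C(X, H)) (A : Set X) (hA : IsCCompact A) (h : C(X, ℝ)) (C : Set ℝ) (hC : IsClosed C) :
    IsClosed (f '' (A ∩ h ⁻¹' C)) := by
  rcases C.eq_empty_or_nonempty with rfl | hne
  · simp
  refine isClosed_of_closure_subset fun y hy => ?_
  let z : C(X, ℝ) := ⟨fun x => dist (f x) y + Metric.infDist (h x) C, by
    have := Metric.continuous_infDist_pt C
    fun_prop⟩
  have h0 : (0 : ℝ) ∈ z '' A := by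
    rw [← (hA z).isClosed.closure_eq, Metric.mem_closure_iff]
    intro ε hε
    obtain ⟨_, ⟨x, ⟨hxA, hxC⟩, rfl⟩, hd⟩ := Metric.mem_closure_iff.1 hy ε hε
    refine ⟨z x, mem_image_of_mem _ hxA, ?_⟩
    have : Metric.infDist (h x) C = 0 := Metric.infDist_zero_of_mem hxC
    have hz : z x = dist (f x) y := by simp [z, this]
    rw [hz, dist_comm y] at *
    simpa [Real.dist_eq] using hd
  obtain ⟨x, hxA, hx⟩ := h0
  have hx' : dist (f x) y + Metric.infDist (h x) C = 0 := hx
  have h1 : 0 ≤ dist (f x) y := dist_nonneg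
  have h2 : 0 ≤ Metric.infDist (h x) C := Metric.infDist_nonneg
  refine ⟨x, ⟨hxA, ?_⟩, dist_eq_zero.1 (by linarith)⟩
  exact (hC.mem_iff_infDist_zero hne).2 (by linarith)

theorem aux_ccompact_sUnion {X : Type*} [TopologicalSpace X] (S : Set (Set X)) (hS : S.Finite)
    (h : ∀ A ∈ S, IsCCompact A) : IsCCompact (⋃₀ S) := by
  intro f
  rw [sUnion_eq_biUnion, image_iUnion₂]
  exact hS.isCompact_biUnion fun A hA => h A hA f

theorem aux_extend {X H : Type*} [TopologicalSpace X] [MetricSpace H]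
    (f : C(X, H)) (A : Set X) (hA : IsCCompact A) (hinj : InjOn f A) (h : C(X, ℝ)) :
    ∃ g : C(H, ℝ), ∀ x ∈ A, g (f x) = h x := by
  have hcl : IsClosed (f '' A) := by
    simpa using aux_closed_image f A hA h univ isClosed_univ
  have hex : ∀ k : f '' A, ∃ x ∈ A, f x = k := fun k => k.2
  choose φ hφA hφ using hex
  have hval : ∀ x (hx : x ∈ A), φ ⟨f x, mem_image_of_mem _ hx⟩ = x := fun x hx =>
    hinj (hφA _) hx (hφ _)
  have hcont : Continuous fun k : f '' A => h (φ k) := by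
    rw [continuous_iff_isClosed]
    intro C hC
    have : (fun k : f '' A => h (φ k)) ⁻¹' C = Subtype.val ⁻¹' (f '' (A ∩ h ⁻¹' C)) := by
      ext k
      constructor
      · intro hk
        exact ⟨φ k, ⟨hφA k, hk⟩, hφ k⟩
      · rintro ⟨x, ⟨hxA, hxC⟩, hx⟩
        have hk : φ k = x := hinj (hφA _) hxA ((hφ k).trans hx.symm)
        simpa [hk] using hxC
    rw [this]
    exact (aux_closed_image f A hA h C hC).preimage continuous_subtype_val
  obtain ⟨g, hg⟩ := ContinuousMap.exists_restrict_eq hcl ⟨_, hcont⟩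
  refine ⟨g, fun x hx => ?_⟩
  have := DFunLike.congr_fun hg ⟨f x, mem_image_of_mem _ hx⟩
  simpa [hval x hx] using this

theorem aux_sep {X H : Type*} [TopologicalSpace X] [MetricSpace H] [CompactSpace H]
    (lam : Set (Set X)) (hlam : ∀ A ∈ lam, IsCCompact A) (f : C(X, H))
    (hinj : InjOn f (⋃₀ lam)) :
    @SeparableSpace C(X, ℝ) (setOpenTopology lam) := by
  letI := setOpenTopology lam
  have hc : Continuous fun g : C(H, ℝ) => g.comp f := by
    refine continuous_generateFrom_iff.2 ?_
    rintro _ ⟨F, hF, U, hU, rfl⟩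
    have hK : IsCompact (f '' F) := by
      have := aux_closed_image f F (hlam F hF) 0 univ isClosed_univ
      exact IsClosed.isCompact (by simpa using this)
    have := ContinuousMap.isOpen_setOf_mapsTo hK hU
    convert this using 1
    ext g
    simp [mapsTo_iff_image_subset, image_image]
    rfl
  have hd : DenseRange fun g : C(H, ℝ) => g.comp f := by
    rw [DenseRange, (isTopologicalBasis_of_subbasis (t := setOpenTopology lam) rfl).dense_iff]
    rintro _ ⟨S, ⟨hSf, hS⟩, rfl⟩ ⟨h, hh⟩
    choose! F hF U hU hFU using hS
    have hsub : ⋃₀ (F '' S) ⊆ ⋃₀ lam :=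
      sUnion_subset_sUnion (by rintro _ ⟨s, hs, rfl⟩; exact hF hs)
    obtain ⟨g, hg⟩ := aux_extend f (⋃₀ (F '' S))
      (aux_ccompact_sUnion _ (hSf.image F) (by rintro _ ⟨s, hs, rfl⟩; exact hlam _ (hF hs)))
      (hinj.mono hsub) h
    refine ⟨g.comp f, ?_, g, rfl⟩
    intro s hs
    have h1 := hh s hs
    rw [hFU hs] at h1 ⊢
    rintro _ ⟨x, hx, rfl⟩
    have : g (f x) = h x := hg x (subset_sUnion_of_mem (mem_image_of_mem F hs) hx)
    simpa [this] using h1 (mem_image_of_mem _ hx)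
  exact hd.separableSpace hc

theorem aux_cube (Y : Type*) [MetricSpace Y] [SeparableSpace Y] :
    ∃ e : C(Y, ℕ → unitInterval), Function.Injective e := by
  rcases isEmpty_or_nonempty Y with hY | hY
  · exact ⟨⟨fun _ _ => 0, continuous_const⟩, fun a => (hY.false a).elim⟩
  refine ⟨⟨fun y n => projIcc 0 1 zero_le_one (dist y (denseSeq Y n)), ?_⟩, ?_⟩
  · refine continuous_pi fun n => continuous_projIcc.comp (by fun_prop)
  · intro y z hyz
    by_contra hne
    have hpos : 0 < dist y z := dist_pos.2 hne
    obtain ⟨n, hn⟩ := (denseRange_denseSeq Y).exists_dist_lt y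
      (ε := min (dist y z) 1 / 2) (by positivity)
    have h1 := congrArg Subtype.val (congrFun hyz n)
    simp only [ContinuousMap.coe_mk, coe_projIcc] at h1
    have t := dist_triangle_right y z (denseSeq Y n)
    have m1 := min_le_left (dist y z) 1
    have m2 := min_le_right (dist y z) 1
    have p1 : 0 ≤ dist y (denseSeq Y n) := dist_nonneg
    have p2 : 0 ≤ dist z (denseSeq Y n) := dist_nonneg
    rw [max_eq_right (le_min zero_le_one p1), max_eq_right (le_min zero_le_one p2),
      min_eq_right (by linarith)] at h1
    rcases min_choice 1 (dist z (denseSeq Y n)) with h | h <;> rw [h] at h1 <;> linarith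

theorem aux_submet {X : Type*} [TopologicalSpace X] [T35Space X]
    (lam : Set (Set X)) (hlam : MemPsi lam)
    (hsep : @SeparableSpace C(X, ℝ) (setOpenTopology lam)) :
    SeparablyLamSubmetrizable X lam := by
  letI := setOpenTopology lam
  let d : ℕ → C(X, ℝ) := denseSeq C(X, ℝ)
  have hd : DenseRange d := denseRange_denseSeq _
  let F : X → ℕ → ℝ := fun x n => d n x
  have hF : Continuous F := continuous_pi fun n => (d n).continuous
  let m : MetricSpace (range F) := metrizableSpaceMetric (range F)
  refine ⟨range F, m, inferInstance, rangeFactorization F, ?_, rangeFactorization_surjective, ?_⟩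
  · exact hF.subtype_mk _
  · intro x hx y hy hxy
    have hxy' : F x = F y := congrArg Subtype.val hxy
    by_contra hne
    have hsing : ∀ w ∈ ⋃₀ lam, {w} ∈ lam := by
      rintro w ⟨A, hA, hwA⟩
      refine hlam.hereditary A hA {w} (by simpa using hwA) (singleton_nonempty _)
        isClosed_singleton ?_
      intro f
      simp
    have hop : ∀ w ∈ ⋃₀ lam, ∀ U : Set ℝ, IsOpen U → IsOpen {f : C(X, ℝ) | f '' {w} ⊆ U} :=
      fun w hw U hU => isOpen_generateFrom_of_mem ⟨{w}, hsing w hw, U, hU, rfl⟩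
    obtain ⟨g, hg, hgx, hgy⟩ := CompletelyRegularSpace.completely_regular x {y}
      isClosed_singleton (by simpa using hne)
    let G : C(X, ℝ) := ⟨fun w => (g w : ℝ), by fun_prop⟩
    obtain ⟨n, hn⟩ := hd.exists_mem_open
      ((hop x hx (Iio (1/2)) isOpen_Iio).inter (hop y hy (Ioi (1/2)) isOpen_Ioi))
      ⟨G, by
        have : g y = 1 := hgy rfl
        constructor <;> simp [G, hgx, this] <;> norm_num⟩
    have h1 : d n x < 1/2 := by simpa using hn.1
    have h2 : 1/2 < d n y := by simpa using hn.2
    have : d n x = d n y := congrFun hxy' n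
    linarith

/-- For a Tychonoff space `X` and `λ ∈ Ψ`, `C_λ(X)` is separable iff `X` is
separably `λ`-submetrizable. -/
theorem separable_iff_separablyLamSubmetrizable
    {X : Type*} [TopologicalSpace X] [T35Space X]
    (lam : Set (Set X)) (hlam : MemPsi lam) :
    @SeparableSpace C(X, ℝ) (setOpenTopology lam) ↔ SeparablyLamSubmetrizable X lam := by
  refine ⟨aux_submet lam hlam, ?_⟩
  rintro ⟨Y, m, hs, f, hf, -, hinj⟩
  obtain ⟨e, he⟩ := aux_cube Y
  letI : MetricSpace (ℕ → unitInterval) := metrizableSpaceMetric _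
  exact aux_sep lam hlam.ccompact (e.comp ⟨f, hf⟩) (he.comp_injOn hinj)
end

section
/- Let X be a Tychonoff space and λ ∈ Ψ, and suppose C_λ(X) is a separable space. Then every element of the family λ is a metrizable compact subset of X. -/
open Set Filter Topology TopologicalSpace ContinuousMap

/-- The image of a C-compact set under a countable family of real functions is compact. -/
lemma ccompact_image_seq {X : Type*} [TopologicalSpace X] {A : Set X} (hA : IsCCompact A)
    (f : ℕ → C(X, ℝ)) : IsCompact ((fun x n => f n x) '' A) := by
  letI : MetricSpace (ℕ → ℝ) := metrizableSpaceMetric (ℕ → ℝ)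
  have hc : Continuous (fun x n => f n x : X → ℕ → ℝ) := by fun_prop
  refine (isCompact_univ_pi (fun n => hA (f n))).of_isClosed_subset ?_ ?_
  · refine isClosed_of_closure_subset fun p hp => ?_
    have hd : Continuous (fun x => dist (fun n => f n x : ℕ → ℝ) p) := hc.dist continuous_const
    have hcl := (hA ⟨_, hd⟩).isClosed
    have h0 : (0 : ℝ) ∈ (fun x => dist (fun n => f n x : ℕ → ℝ) p) '' A := by
      have h1 : dist p p ∈ closure ((fun q => dist q p) '' ((fun x n => f n x) '' A)) :=
        image_closure_subset_closure_image (continuous_id.dist continuous_const)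
          (mem_image_of_mem (fun q => dist q p) hp)
      rw [image_image, dist_self] at h1
      exact hcl.closure_subset h1
    obtain ⟨x, hx, hx0⟩ := h0
    exact ⟨x, hx, dist_eq_zero.1 hx0⟩
  · rintro _ ⟨x, hx, rfl⟩ n -
    exact ⟨x, hx, rfl⟩

/-- A C-compact set whose points are separated by countably many functions is compact. -/
lemma ccompact_isCompact {X : Type*} [TopologicalSpace X] [T35Space X] {A : Set X}
    (hA : IsCCompact A) (f : ℕ → C(X, ℝ)) (hf : InjOn (fun x n => f n x : X → ℕ → ℝ) A) :
    IsCompact A := by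
  have key : ∀ (g : C(X, ℝ)) (U : Ultrafilter X), ↑U ≤ 𝓟 A → ∃ b ∈ A,
      Tendsto g U (𝓝 (g b)) ∧ ∀ n, Tendsto (f n) U (𝓝 (f n b)) := by
    intro g U hU
    let k : ℕ → C(X, ℝ) := fun n => Nat.casesOn n g f
    have hk := ccompact_image_seq hA k
    have hle : ↑(U.map (fun x n => k n x)) ≤ 𝓟 ((fun x n => k n x : X → ℕ → ℝ) '' A) := by
      rw [Ultrafilter.coe_map, ← map_principal]
      exact map_mono hU
    obtain ⟨_, ⟨b, hb, rfl⟩, hlim⟩ := isCompact_iff_ultrafilter_le_nhds.1 hk _ hle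
    have ht : Tendsto (fun x n => k n x) (U : Filter X) (𝓝 (fun n => k n b)) := hlim
    rw [tendsto_pi_nhds] at ht
    exact ⟨b, hb, ht 0, fun n => ht (n + 1)⟩
  rw [isCompact_iff_ultrafilter_le_nhds]
  intro U hU
  obtain ⟨a, ha, -, hfa⟩ := key (f 0) U hU
  refine ⟨a, ha, ?_⟩
  intro V hV
  obtain ⟨W, hWV, hWo, haW⟩ := mem_nhds_iff.1 hV
  obtain ⟨g, hg, hg0, hg1⟩ := CompletelyRegularSpace.completely_regular a Wᶜ
    hWo.isClosed_compl (by simpa using haW)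
  obtain ⟨b, hb, hgb, hfb⟩ := key ⟨fun x => (g x : ℝ), by fun_prop⟩ U hU
  have hab : b = a := hf hb ha (funext fun n => tendsto_nhds_unique (hfb n) (hfa n))
  subst hab
  have h1 : ∀ᶠ x in (U : Filter X), (g x : ℝ) < 1 := by
    refine hgb.eventually_lt_const ?_
    simp [hg0]
  filter_upwards [h1] with x hx
  by_contra hxV
  have h2 : g x = 1 := hg1 (fun hxW => hxV (hWV hxW))
  simp [h2] at hx

/-- For a Tychonoff space `X` and `λ ∈ Ψ`, if `C_λ(X)` is separable, then
every element of `λ` is a metrizable compact subset of `X`. -/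
theorem mem_lam_compact_metrizable_of_separable
    {X : Type*} [TopologicalSpace X] [T35Space X]
    (lam : Set (Set X)) (hlam : MemPsi lam)
    (hsep : @SeparableSpace C(X, ℝ) (setOpenTopology lam)) :
    ∀ A ∈ lam, IsCompact A ∧ TopologicalSpace.MetrizableSpace A := by
  intro A hA
  let f : ℕ → C(X, ℝ) := @denseSeq C(X, ℝ) (setOpenTopology lam) hsep _
  have hd : @DenseRange C(X, ℝ) (setOpenTopology lam) _ f :=
    @denseRange_denseSeq C(X, ℝ) (setOpenTopology lam) hsep _
  have hsing : ∀ x ∈ A, {x} ∈ lam := fun x hx =>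
    hlam.hereditary A hA {x} (singleton_subset_iff.2 hx) (singleton_nonempty x)
      isClosed_singleton (fun g => by simp)
  have hopen : ∀ x ∈ A, ∀ V : Set ℝ, IsOpen V →
      IsOpen[setOpenTopology lam] {h : C(X, ℝ) | h x ∈ V} := by
    intro x hx V hV
    refine isOpen_generateFrom_of_mem ⟨{x}, hsing x hx, V, hV, ?_⟩
    ext h
    simp
  have hf : InjOn (fun x n => f n x : X → ℕ → ℝ) A := by
    intro x hx y hy hxy
    by_contra hne
    obtain ⟨g, hg, hg0, hg1⟩ := CompletelyRegularSpace.completely_regular x {y}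
      isClosed_singleton (by simpa using hne)
    have hg1' : g y = 1 := hg1 rfl
    have ho := @IsOpen.inter C(X, ℝ) (setOpenTopology lam) _ _
      (hopen x hx (Iio (1 / 2)) isOpen_Iio) (hopen y hy (Ioi (1 / 2)) isOpen_Ioi)
    obtain ⟨n, hn1, hn2⟩ := @DenseRange.exists_mem_open C(X, ℝ) (setOpenTopology lam) _ _ _ hd ho
      ⟨⟨fun x => (g x : ℝ), by fun_prop⟩, by simp [hg0], by
        simp only [mem_setOf_eq, ContinuousMap.coe_mk, hg1', mem_Ioi]; norm_num⟩
    have h3 : f n x = f n y := congrFun hxy n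
    simp only [mem_setOf_eq, mem_Iio, mem_Ioi] at hn1 hn2
    linarith
  have hcomp := ccompact_isCompact (hlam.ccompact A hA) f hf
  refine ⟨hcomp, ?_⟩
  haveI : CompactSpace A := isCompact_iff_compactSpace.1 hcomp
  have hc : Continuous (fun (x : A) n => f n x : A → ℕ → ℝ) := by fun_prop
  exact (hc.isClosedEmbedding (fun x y h => Subtype.ext (hf x.2 y.2 h))).isEmbedding.metrizableSpace
end

section
/- Let X be a Tychonoff separably λ-submetrizable space and let λ, μ ∈ Ψ with μ ⊆ λ. Then X has property S_fin(Λ(λ), Λ(μ)) if and only if the bitopological space (C(X), τ_μ, τ_λ) is M_{(τ_λ,τ_μ)}-separable. -/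
open Set Filter Topology TopologicalSpace ContinuousMap

lemma exists_finite_preimage {α β : Type*} {f : α → β} {s : Set α} {t : Set β}
    (ht : t.Finite) (hts : t ⊆ f '' s) : ∃ r ⊆ s, r.Finite ∧ f '' r = t := by
  obtain ⟨r, hr, hbij⟩ := (Set.SurjOn.exists_bijOn_subset (f := f) (s := s) (t := t) hts)
  exact ⟨r, hr, hbij.finite_iff_finite.mpr ht, hbij.image_eq⟩

/-! ### Helper lemmas -/

/-- A map to the Hilbert cube, injective on `⋃ lam`. -/
lemma exists_cube_map {X : Type*} [TopologicalSpace X] (lam : Set (Set X))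
    (hsm : SeparablyLamSubmetrizable X lam) :
    ∃ e : C(X, ℕ → unitInterval), Set.InjOn e (⋃₀ lam) := by
  obtain ⟨Y, m, hsep, f, hf, -, hinj⟩ := hsm
  by_cases hX : Nonempty X
  · obtain ⟨x0⟩ := hX
    haveI : Nonempty Y := ⟨f x0⟩
    let y : ℕ → Y := denseSeq Y
    have hy : DenseRange y := denseRange_denseSeq Y
    refine ⟨⟨fun x i => Set.projIcc (0:ℝ) 1 zero_le_one (dist (f x) (y i)), ?_⟩, ?_⟩
    · refine continuous_pi fun i => ?_
      exact continuous_projIcc.comp (hf.dist continuous_const)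
    · intro a ha b hb hab
      apply hinj ha hb
      by_contra hne
      have hpos : 0 < dist (f a) (f b) := dist_pos.mpr hne
      set r := min (dist (f a) (f b) / 2) (1/2) with hr
      have hr0 : 0 < r := by positivity
      obtain ⟨i, hi⟩ := hy.exists_dist_lt (f a) hr0
      have h1 := congrFun hab i
      have h2 := congrArg Subtype.val h1
      simp only [ContinuousMap.coe_mk, Set.coe_projIcc] at h2
      have hr1 : r ≤ dist (f a) (f b) / 2 := min_le_left _ _
      have hr2 : r ≤ 1/2 := min_le_right _ _
      have htri := dist_triangle_right (f a) (f b) (y i)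
      have h0 : (0:ℝ) ≤ dist (f a) (y i) := dist_nonneg
      have h0' : (0:ℝ) ≤ dist (f b) (y i) := dist_nonneg
      rw [max_eq_right (le_min zero_le_one h0), max_eq_right (le_min zero_le_one h0'),
        min_eq_right (by linarith)] at h2
      rcases le_total 1 (dist (f b) (y i)) with h | h
      · rw [min_eq_left h] at h2; linarith
      · rw [min_eq_right h] at h2; linarith
  · haveI := not_nonempty_iff.mp hX
    exact ⟨⟨fun x => isEmptyElim x, continuous_of_const fun x => isEmptyElim x⟩,
      fun a => isEmptyElim a⟩

lemma isCompact_of_isCCompact {X : Type*} [TopologicalSpace X] [T35Space X]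
    (e : C(X, ℕ → unitInterval)) {A : Set X} (hA : IsCCompact A) (he : Set.InjOn e A) :
    IsCompact A := by
  letI : MetricSpace (ℕ → unitInterval) := TopologicalSpace.metrizableSpaceMetric _
  -- key: a continuous nonnegative function positive on `A` cannot tend to `0` along `u`
  have key : ∀ u : Ultrafilter X, (u : Filter X) ≤ 𝓟 A → ∀ p : C(X, ℝ),
      (∀ x ∈ A, 0 < p x) → Tendsto p u (𝓝 0) → False := by
    intro u hu p hp ht
    have hcl : (0:ℝ) ∈ closure (p '' A) := by
      refine mem_closure_of_tendsto ht ?_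
      have : A ∈ (u : Filter X) := le_principal_iff.mp hu
      filter_upwards [this] with x hx using ⟨x, hx, rfl⟩
    rw [(hA p).isClosed.closure_eq] at hcl
    obtain ⟨x, hx, h0⟩ := hcl
    exact (hp x hx).ne' h0
  rw [isCompact_iff_ultrafilter_le_nhds]
  intro u hu
  obtain ⟨q, -, hq⟩ := isCompact_univ.ultrafilter_le_nhds (u.map e) (by simp)
  have hq : Tendsto e u (𝓝 q) := hq
  have hqd : Tendsto (fun x => dist (e x) q) u (𝓝 0) := by
    have := hq.dist (tendsto_const_nhds (x := q))
    simpa using this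
  have hqA : q ∈ e '' A := by
    by_contra hn
    refine key u hu ⟨fun x => dist (e x) q, by fun_prop⟩ ?_ hqd
    intro x hx
    exact dist_pos.mpr fun h => hn ⟨x, hx, h⟩
  obtain ⟨a, ha, rfl⟩ := hqA
  refine ⟨a, ha, ?_⟩
  have hg : ∀ g : C(X, ℝ), Tendsto g u (𝓝 (g a)) := by
    intro g
    obtain ⟨r, -, hr⟩ := (hA g).ultrafilter_le_nhds (u.map g) (by
      rw [le_principal_iff]
      have : A ∈ (u : Filter X) := le_principal_iff.mp hu
      exact Filter.image_mem_map this)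
    have hr : Tendsto g u (𝓝 r) := hr
    by_cases hra : r = g a
    · rwa [hra] at hr
    · exfalso
      refine key u hu ⟨fun x => dist (e x) (e a) + dist (g x) r, by fun_prop⟩ ?_ ?_
      · intro x hx
        by_cases hxa : x = a
        · subst hxa
          exact add_pos_of_nonneg_of_pos dist_nonneg (dist_pos.mpr (Ne.symm hra))
        · exact add_pos_of_pos_of_nonneg
            (dist_pos.mpr fun h => hxa (he hx ha h)) dist_nonneg
      · have := hqd.add (hr.dist (tendsto_const_nhds (x := r)))
        simpa using this
  intro U hU
  obtain ⟨V, hVU, hVo, haV⟩ := mem_nhds_iff.mp hU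
  obtain ⟨f, hf, hfa, hf1⟩ := CompletelyRegularSpace.completely_regular a Vᶜ
    hVo.isClosed_compl (by simpa using haV)
  have ht := hg ⟨fun x => (f x : ℝ), by fun_prop⟩
  simp only [ContinuousMap.coe_mk, hfa] at ht
  have hev := ht.eventually (gt_mem_nhds (show ((0 : unitInterval) : ℝ) < 1 by simp))
  filter_upwards [hev] with x hx
  apply hVU
  by_contra hxV
  have := hf1 hxV
  simp only [Pi.one_apply] at this
  rw [this] at hx
  simp at hx

lemma exists_ball_of_open {X : Type*} [TopologicalSpace X] [Nonempty X] {lam : Set (Set X)}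
    (h : MemPsi lam) {W : Set C(X, ℝ)}
    (hW : @IsOpen _ (setOpenTopology lam) W) {f : C(X, ℝ)} (hf : f ∈ W) :
    ∃ K ∈ lam, ∃ ε > 0, ∀ g : C(X, ℝ), (∀ x ∈ K, |g x - f x| < ε) → g ∈ W := by
  change GenerateOpen _ W at hW
  induction hW with
  | basic S hS =>
    obtain ⟨F, hF, U, hU, rfl⟩ := hS
    obtain ⟨δ, hδ, hsub⟩ := (h.ccompact F hF f).exists_thickening_subset_open hU hf
    refine ⟨F, hF, δ, hδ, fun g hg => ?_⟩
    rintro _ ⟨x, hx, rfl⟩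
    apply hsub
    rw [Metric.mem_thickening_iff]
    exact ⟨f x, ⟨x, hx, rfl⟩, by rw [Real.dist_eq]; exact hg x hx⟩
  | univ =>
    obtain ⟨A, hA, -⟩ := h.piNetwork univ isOpen_univ univ_nonempty
    exact ⟨A, hA, 1, one_pos, fun g _ => mem_univ g⟩
  | inter S T _ _ ihS ihT =>
    obtain ⟨K, hK, ε, hε, h1⟩ := ihS hf.1
    obtain ⟨L, hL, δ, hδ, h2⟩ := ihT hf.2
    refine ⟨K ∪ L, h.union_mem hK hL, min ε δ, lt_min hε hδ, fun g hg => ⟨?_, ?_⟩⟩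
    · exact h1 g fun x hx => (hg x (Or.inl hx)).trans_le (min_le_left _ _)
    · exact h2 g fun x hx => (hg x (Or.inr hx)).trans_le (min_le_right _ _)
  | sUnion 𝒮 _ ih =>
    obtain ⟨S, hS, hfS⟩ := hf
    obtain ⟨K, hK, ε, hε, h1⟩ := ih S hS hfS
    exact ⟨K, hK, ε, hε, fun g hg => ⟨S, hS, h1 g hg⟩⟩

lemma dense_of_approx {X : Type*} [TopologicalSpace X] [Nonempty X] {lam : Set (Set X)}
    (h : MemPsi lam) {D : Set C(X, ℝ)}
    (hD : ∀ f : C(X, ℝ), ∀ K ∈ lam, ∀ ε > 0, ∃ g ∈ D, ∀ x ∈ K, |g x - f x| < ε) :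
    @Dense _ (setOpenTopology lam) D := by
  letI := setOpenTopology lam
  rw [dense_iff_inter_open]
  rintro W hW ⟨f, hf⟩
  obtain ⟨K, hK, ε, hε, h1⟩ := exists_ball_of_open h hW hf
  obtain ⟨g, hg, h2⟩ := hD f K hK ε hε
  exact ⟨g, h1 g h2, hg⟩

lemma approx_of_dense {X : Type*} [TopologicalSpace X] {lam : Set (Set X)}
    (h : MemPsi lam) (hc : ∀ K ∈ lam, IsCompact K) {D : Set C(X, ℝ)}
    (hD : @Dense _ (setOpenTopology lam) D)
    (f : C(X, ℝ)) (K : Set X) (hK : K ∈ lam) (ε : ℝ) (hε : 0 < ε) :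
    ∃ g ∈ D, ∀ x ∈ K, |g x - f x| < ε := by
  letI := setOpenTopology lam
  obtain ⟨t, htK, hcov⟩ := (hc K hK).elim_nhds_subcover
    (fun x => {y | |f y - f x| < ε / 3}) (fun x _ => by
      refine IsOpen.mem_nhds ?_ (by simp [hε])
      exact isOpen_lt (by fun_prop) continuous_const)
  let P : X → Set X := fun x => K ∩ {y | |f y - f x| ≤ ε / 3}
  have hPl : ∀ x ∈ t, P x ∈ lam := by
    intro x hx
    have hcl : IsClosed {y | |f y - f x| ≤ ε / 3} :=
      isClosed_le (by fun_prop) continuous_const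
    refine h.hereditary K hK _ Set.inter_subset_left ⟨x, htK x hx, by simp; positivity⟩
      ((h.closed K hK).inter hcl) ?_
    intro g
    exact ((hc K hK).inter_right hcl).image g.continuous
  let W : Set C(X, ℝ) := ⋂ x ∈ t, {g : C(X, ℝ) | g '' P x ⊆ Metric.ball (f x) (ε / 2)}
  have hW : IsOpen W := by
    refine isOpen_biInter_finset fun x hx => ?_
    exact isOpen_generateFrom_of_mem ⟨P x, hPl x hx, _, Metric.isOpen_ball, rfl⟩
  have hfW : f ∈ W := by
    simp only [W, Set.mem_iInter]
    rintro x hx _ ⟨y, hy, rfl⟩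
    rw [Metric.mem_ball, Real.dist_eq]
    have : |f y - f x| ≤ ε / 3 := hy.2
    linarith
  obtain ⟨g, hgW, hgD⟩ := dense_iff_inter_open.mp hD W hW ⟨f, hfW⟩
  refine ⟨g, hgD, fun y hy => ?_⟩
  obtain ⟨x, hx, hyx⟩ := Set.mem_iUnion₂.mp (hcov hy)
  have hyx : |f y - f x| < ε / 3 := hyx
  simp only [W, Set.mem_iInter] at hgW
  have := hgW x hx ⟨y, ⟨hy, hyx.le⟩, rfl⟩
  rw [Metric.mem_ball, Real.dist_eq] at this
  rw [abs_lt] at *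
  constructor <;> linarith [this.1, this.2, hyx.1, hyx.2]

lemma exists_countable_approx {X : Type*} [TopologicalSpace X] [T35Space X]
    {lam : Set (Set X)} (hc : ∀ K ∈ lam, IsCompact K)
    (e : C(X, ℕ → unitInterval)) (he : Set.InjOn e (⋃₀ lam)) :
    ∃ s : ℕ → C(X, ℝ), ∀ f : C(X, ℝ), ∀ K ∈ lam, ∀ ε > 0,
      ∃ n, ∀ x ∈ K, |s n x - f x| < ε := by
  refine ⟨fun n => (denseSeq C(ℕ → unitInterval, ℝ) n).comp e, fun f K hK ε hε => ?_⟩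
  haveI : CompactSpace K := isCompact_iff_compactSpace.mp (hc K hK)
  have hemb : IsClosedEmbedding (fun x : K => e x) := by
    apply Continuous.isClosedEmbedding (by fun_prop)
    intro a b hab
    exact Subtype.ext (he ⟨K, hK, a.2⟩ ⟨K, hK, b.2⟩ hab)
  obtain ⟨F, hF⟩ := ContinuousMap.exists_extension hemb (f.restrict K)
  obtain ⟨n, hn⟩ := (denseRange_denseSeq C(ℕ → unitInterval, ℝ)).exists_dist_lt F hε
  refine ⟨n, fun x hx => ?_⟩
  have h1 : F (e x) = f x := by
    have := DFunLike.congr_fun hF ⟨x, hx⟩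
    simpa using this
  rw [← h1, abs_sub_comm, ← Real.dist_eq]
  exact (ContinuousMap.dist_apply_le_dist (e x)).trans_lt hn

/-- One step of the selection: approximating a single function up to `ε`. -/
lemma sfin_step {X : Type*} [TopologicalSpace X]
    {lam mu : Set (Set X)} (hS : Sfin (fCovers lam) (fCovers mu))
    (D : ℕ → Set C(X, ℝ)) (g : C(X, ℝ)) (ε : ℝ)
    (hD : ∀ n, ∀ K ∈ lam, ∃ h ∈ D n, ∀ x ∈ K, |h x - g x| < ε) :
    ∃ F : ℕ → Set C(X, ℝ), (∀ n, (F n).Finite ∧ F n ⊆ D n) ∧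
      ∀ K ∈ mu, ∃ n, ∃ h ∈ F n, ∀ x ∈ K, |h x - g x| < ε := by
  classical
  let V : C(X, ℝ) → Set X := fun h => {x | |h x - g x| < ε}
  by_cases hex : ∃ n, ∃ h ∈ D n, V h = univ
  · obtain ⟨n, h, hh, hV⟩ := hex
    refine ⟨fun m => if m = n then {h} else ∅, fun m => ?_, fun K _ => ⟨n, h, by simp, ?_⟩⟩
    · by_cases hm : m = n
      · subst hm; simp [hh]
      · simp [hm]
    · intro x _
      have : x ∈ V h := hV ▸ mem_univ x
      exact this
  · push Not at hex
    obtain ⟨B, hB, hBu⟩ := hS (fun n => V '' D n) (fun n => by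
      refine ⟨?_, ?_, ?_⟩
      · rintro ⟨h, hh, hV⟩
        exact hex n h hh hV
      · rintro _ ⟨h, hh, rfl⟩
        refine ⟨⟨fun x => max (ε - |h x - g x|) 0, by fun_prop⟩, ?_⟩
        ext x
        simp [V]
      · intro K hK
        obtain ⟨h, hh, hK⟩ := hD n K hK
        exact ⟨V h, ⟨h, hh, rfl⟩, hK⟩)
    choose F hF1 hF2 hF3 using fun n =>
      exists_finite_preimage (hB n).1 (hB n).2
    refine ⟨F, fun n => ⟨hF2 n, hF1 n⟩, fun K hK => ?_⟩
    obtain ⟨U, hU, hKU⟩ := hBu.2.2 K hK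
    obtain ⟨n, hn⟩ := Set.mem_iUnion.mp hU
    rw [← hF3 n] at hn
    obtain ⟨h, hh, rfl⟩ := hn
    exact ⟨n, h, hh, hKU⟩

lemma mSep_of_sfin {X : Type*} [TopologicalSpace X] [Nonempty X]
    {lam mu : Set (Set X)} (hlam : MemPsi lam) (hmu : MemPsi mu) (hsub : mu ⊆ lam)
    (hc : ∀ K ∈ lam, IsCompact K) (s : ℕ → C(X, ℝ))
    (hs : ∀ f : C(X, ℝ), ∀ K ∈ lam, ∀ ε > 0, ∃ n, ∀ x ∈ K, |s n x - f x| < ε)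
    (hS : Sfin (fCovers lam) (fCovers mu)) :
    MSepBi (setOpenTopology lam) (setOpenTopology mu) := by
  intro D hD
  have step := fun k j : ℕ => sfin_step hS (fun i => D (Nat.pair (Nat.pair k j) i)) (s k)
    (1 / ((j : ℝ) + 1)) (fun n K hK => approx_of_dense hlam hc (hD _) (s k) K hK _
      (by positivity))
  choose F hF1 hF2 using step
  refine ⟨fun n => F n.unpair.1.unpair.1 n.unpair.1.unpair.2 n.unpair.2, fun n => ?_, ?_⟩
  · have := hF1 n.unpair.1.unpair.1 n.unpair.1.unpair.2 n.unpair.2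
    simpa only [Nat.pair_unpair] using this
  · apply dense_of_approx hmu
    intro f K hK ε hε
    obtain ⟨k, hk⟩ := hs f K (hsub hK) (ε / 2) (by positivity)
    obtain ⟨j, hj⟩ := exists_nat_one_div_lt (show 0 < ε / 2 by positivity)
    obtain ⟨i, h, hh, hhK⟩ := hF2 k j K hK
    refine ⟨h, Set.mem_iUnion.mpr ⟨Nat.pair (Nat.pair k j) i, by simpa using hh⟩, ?_⟩
    intro x hx
    have h1 := hk x hx
    have h2 := hhK x hx
    have h3 := abs_sub_le (h x) (s k x) (f x)
    linarith

lemma sfin_of_mSep {X : Type*} [TopologicalSpace X] [Nonempty X]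
    {lam mu : Set (Set X)} (hlam : MemPsi lam) (hmu : MemPsi mu) (hsub : mu ⊆ lam)
    (hc : ∀ K ∈ lam, IsCompact K)
    (hM : MSepBi (setOpenTopology lam) (setOpenTopology mu)) :
    Sfin (fCovers lam) (fCovers mu) := by
  intro 𝒰 h𝒰
  obtain ⟨F, hF, hFd⟩ := hM (fun n => {h | ∃ U ∈ 𝒰 n, ∀ x ∉ U, h x = 1}) (fun n => by
    apply dense_of_approx hlam
    intro f K hK ε hε
    obtain ⟨U, hU, hKU⟩ := (h𝒰 n).2.2 K hK
    obtain ⟨g, rfl⟩ := (h𝒰 n).2.1 U hU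
    obtain ⟨x0, hx0, hmin⟩ := (hc K hK).exists_isMinOn (hlam.nonempty K hK)
      (f := fun x => |g x|) (by fun_prop)
    have hδ : 0 < |g x0| := abs_pos.mpr (hKU hx0)
    let p : C(X, ℝ) := ⟨fun x => min 1 (|g x| / |g x0|), by fun_prop⟩
    refine ⟨p * f + (1 - p), ⟨_, hU, ?_⟩, ?_⟩
    · intro x hx
      have hx : g x = 0 := by simpa using hx
      simp [p, hx]
    · intro x hx
      have : |g x0| ≤ |g x| := hmin hx
      have hp : p x = 1 := by
        simp only [p, ContinuousMap.coe_mk]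
        exact min_eq_left ((one_le_div hδ).mpr this)
      simpa [hp] using hε)
  choose! u hu1 hu2 using fun n h (hh : h ∈ F n) => (hF n).2 hh
  have hsubU : ∀ n, u n '' F n ⊆ 𝒰 n := by
    rintro n _ ⟨h, hh, rfl⟩
    exact hu1 n h hh
  refine ⟨fun n => u n '' F n, fun n => ⟨(hF n).1.image _, hsubU n⟩, ?_, ?_, ?_⟩
  · intro hmem
    obtain ⟨n, hn⟩ := Set.mem_iUnion.mp hmem
    exact (h𝒰 n).1 (hsubU n hn)
  · intro U hmem
    obtain ⟨n, hn⟩ := Set.mem_iUnion.mp hmem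
    exact (h𝒰 n).2.1 U (hsubU n hn)
  · intro K hK
    obtain ⟨h, hh, hlt⟩ := approx_of_dense hmu (fun K hK => hc K (hsub hK)) hFd 0 K hK 1 one_pos
    obtain ⟨n, hn⟩ := Set.mem_iUnion.mp hh
    refine ⟨u n h, Set.mem_iUnion.mpr ⟨n, h, hn, rfl⟩, fun x hx => ?_⟩
    by_contra hxu
    have h1 := hlt x hx
    rw [hu2 n h hn x hxu] at h1
    simp at h1

/-- For a Tychonoff separably `λ`-submetrizable space `X` and `λ, μ ∈ Ψ` with
`μ ⊆ λ`: `X` has property `S_fin(Λ(λ), Λ(μ))` iff `(C(X), τ_μ, τ_λ)` is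
`M_{(τ_λ,τ_μ)}`-separable. -/
theorem sfin_fCovers_iff_mSep
    {X : Type*} [TopologicalSpace X] [T35Space X]
    (lam mu : Set (Set X)) (hlam : MemPsi lam) (hmu : MemPsi mu) (hsub : mu ⊆ lam)
    (hsm : SeparablyLamSubmetrizable X lam) :
    Sfin (fCovers lam) (fCovers mu) ↔
      MSepBi (setOpenTopology lam) (setOpenTopology mu) := by
  obtain ⟨e, he⟩ := exists_cube_map lam hsm
  have hc : ∀ K ∈ lam, IsCompact K := fun K hK =>
    isCompact_of_isCCompact e (hlam.ccompact K hK) (he.mono (Set.subset_sUnion_of_mem hK))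
  rcases isEmpty_or_nonempty X with hX | hX
  · refine iff_of_true ?_ ?_
    · intro A _
      refine ⟨fun _ => ∅, fun n => ⟨Set.finite_empty, Set.empty_subset _⟩, ?_, ?_, ?_⟩
      · simp
      · simp
      · intro K hK
        obtain ⟨x, -⟩ := hmu.nonempty K hK
        exact isEmptyElim x
    · intro D hD
      haveI : Subsingleton C(X, ℝ) := ⟨fun f g => ContinuousMap.ext fun x => isEmptyElim x⟩
      refine ⟨D, fun n => ⟨Set.toFinite _, subset_rfl⟩, ?_⟩
      have hne : (D 0).Nonempty := @Dense.nonempty _ (setOpenTopology lam) _ ⟨0⟩ (hD 0)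
      obtain ⟨d, hd⟩ := hne
      intro f
      apply @subset_closure _ (setOpenTopology mu)
      rw [Subsingleton.elim f d]
      exact Set.mem_iUnion.mpr ⟨0, hd⟩
  · obtain ⟨s, hs⟩ := exists_countable_approx hc e he
    exact ⟨mSep_of_sfin hlam hmu hsub hc s hs, sfin_of_mSep hlam hmu hsub hc⟩
end
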